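/- Let S be a seed tree of size k ≥ 2, let R be a subtree of S with a decoration ℓ: V_R → ℕ, and set |ℓ| = Σ_{u∈R} ℓ(u). Define M_n = ∏_{u∈R} [deg_{T_n^S}(u) + α + ℓ(u) − 2]_{ℓ(u)} and W_n = ∏_{t=k}^{n−1} (1 + |ℓ|/((1+α)t − 2))^{-1} (with W_k = 1). Then the sequence (M_n · W_n)_{n ≥ k} is a martingale with respect to the natural filtration of the process (T_n^S)_{n ≥ k}, and it is bounded in L². -/

import Mathlib

/-!
Write `x_v = deg v + α - 1` for the weight of a vertex and `x⁽ˡ⁾ = x (x + 1) ⋯ (x + l - 1)` for the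
rising factorial, so that `M = ∏_{u ∈ D} x_u⁽ˡᵘ⁾` (`descPoch_eq_rise`). Attaching a leaf to `v` raises
`x_v` by one and leaves the other old weights alone, and `x (x + 1)⁽ˡ⁾ = (x + l) x⁽ˡ⁾`. Hence
`x_v M(after v) = (x_v + ∑_{u ∈ D, u = v} ℓ_u) M` (`mul_riseProd_shift`). On a tree with `n` vertices
the weights sum to `Z = (1 + α) n - 2`, so summing over `v` gives the conditional mean
`M (1 + |ℓ| / Z)` (`integral_step_riseProd`), which is exactly what the factor `W` compensates.

The only facts about trees that matter are that all degrees are at least one and that they sum to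
`2 (n - 1)`; this property (`IsGood`) holds for the seed and is preserved by every step, hence holds
almost surely at all times.

For the `L²` bound, `(x⁽ˡ⁾)² ≤ x⁽²ˡ⁾` for `x ≥ 0`, and `(1 + a)⁻² ≤ (1 + 2 a)⁻¹` for `a ≥ 0`. So the square
of the martingale attached to `ℓ` is dominated by the martingale attached to `2 ℓ`, whose mean is
constant.
-/


open MeasureTheory Filter Asymptotics

noncomputable section

namespace AffinePA

instance (V : Type*) : MeasurableSpace (SimpleGraph V) := ⊤

/-- The degree of a vertex. -/
def degR {V : Type*} (G : SimpleGraph V) (v : V) : ℕ := Nat.card {w // G.Adj v w}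

/-- The tree on `n+1` vertices obtained from `G` by attaching the new vertex to `u`. -/
def extendTree {n : ℕ} (G : SimpleGraph (Fin n)) (u : Fin n) : SimpleGraph (Fin (n + 1)) :=
  SimpleGraph.fromRel fun a b =>
    (∃ a' b' : Fin n, a = Fin.castSucc a' ∧ b = Fin.castSucc b' ∧ G.Adj a' b') ∨
      (a = Fin.castSucc u ∧ b = Fin.last n)

/-- One step of the affine preferential attachment dynamics. -/
def stepMeasure (α : ℝ) {n : ℕ} (G : SimpleGraph (Fin n)) :
    Measure (SimpleGraph (Fin (n + 1))) :=
  ∑ u : Fin n,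
    ENNReal.ofReal (((degR G u : ℝ) - 1 + α) / ((1 + α) * (n : ℝ) - 2)) •
      Measure.dirac (extendTree G u)

/-- The law of the α-PA tree with `m` added vertices, started from the seed `S`. -/
def paLaw (α : ℝ) {k : ℕ} (S : SimpleGraph (Fin k)) :
    (m : ℕ) → Measure (SimpleGraph (Fin (k + m)))
  | 0 => Measure.dirac S
  | m + 1 => (paLaw α S m).bind (stepMeasure α)

/-- The weight `∏_u [deg_T(f u) - 1]_{ℓ u}` of a map `f`. -/
def embWeight {V W : Type*} [Fintype V] (T : SimpleGraph W) (ℓ : V → ℕ) (f : V → W) : ℝ :=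
  ∏ u : V, ((degR T (f u) - 1).descFactorial (ℓ u) : ℝ)

/-- The observable `F_{(τ,ℓ)}(T)`. -/
def obsG {V W : Type*} [Fintype V] (τ : SimpleGraph V) (ℓ : V → ℕ) (T : SimpleGraph W) : ℝ :=
  ∑ᶠ φ : τ ↪g T, embWeight T ℓ ⇑φ

/-- The weight `w(τ,ℓ)` of a decorated tree. -/
def weightG {V : Type*} [Fintype V] (τ : SimpleGraph V) (ℓ : V → ℕ) : ℕ :=
  if Fintype.card V ≤ 2 ∧ ∀ v, ℓ v = 0 then 1
  else (∑ v, ℓ v) + Nat.card {v // degR τ v = 1 ∧ ℓ v = 0}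

/-- A decorated tree: a finite graph on `Fin n` with nonnegative integer decorations. -/
structure DecTree where
  n : ℕ
  tree : SimpleGraph (Fin n)
  dec : Fin n → ℕ

def DecTree.wt (τ : DecTree) : ℕ := weightG τ.tree τ.dec

def DecTree.decSum (τ : DecTree) : ℕ := ∑ v, τ.dec v

def DecTree.obs (τ : DecTree) {W : Type*} (T : SimpleGraph W) : ℝ := obsG τ.tree τ.dec T

/-- The strict partial order `≺` on decorated trees. -/
def DecLt (σ τ : DecTree) : Prop :=
  (σ.wt < τ.wt ∧ σ.n ≤ τ.n) ∨ (σ.wt = τ.wt ∧ σ.n < τ.n) ∨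
    (σ.wt = τ.wt ∧ σ.n = τ.n ∧ σ.decSum < τ.decSum)

open Classical in
/-- `F_{τ+τ}(T)`: sum over pairs of embeddings with overlapping images. -/
def obsOverlapG {V W : Type*} [Fintype V] (τ : SimpleGraph V) (ℓ : V → ℕ)
    (T : SimpleGraph W) : ℝ :=
  ∑ᶠ (φ₁ : τ ↪g T) (φ₂ : τ ↪g T),
    if (Set.range ⇑φ₁ ∩ Set.range ⇑φ₂).Nonempty then
      embWeight T ℓ ⇑φ₁ * embWeight T ℓ ⇑φ₂
    else 0

open Classical in
/-- `F_{τ,σ}(T)`: sum over pairs of embeddings with disjoint images. -/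
def obsDisjG {V₁ V₂ W : Type*} [Fintype V₁] [Fintype V₂] (τ : SimpleGraph V₁) (ℓτ : V₁ → ℕ)
    (σ : SimpleGraph V₂) (ℓσ : V₂ → ℕ) (T : SimpleGraph W) : ℝ :=
  ∑ᶠ (φ₁ : τ ↪g T) (φ₂ : σ ↪g T),
    if Disjoint (Set.range ⇑φ₁) (Set.range ⇑φ₂) then
      embWeight T ℓτ ⇑φ₁ * embWeight T ℓσ ⇑φ₂
    else 0

/-- `f ≈ g` : same order of magnitude, eventually. -/
def asympEquiv (f g : ℕ → ℝ) : Prop :=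
  ∃ C : ℝ, 0 < C ∧ ∀ᶠ n in atTop, f n ≤ C * g n ∧ g n ≤ C * f n

/-- Descending factorial `[x]_l` of a real number. -/
def descPoch (x : ℝ) (l : ℕ) : ℝ := ∏ i ∈ Finset.range l, (x - (i : ℝ))

/-- Total variation distance between two measures. -/
def tvDist {X : Type*} [MeasurableSpace X] (μ ν : Measure X) : ℝ :=
  ⨆ s : {s : Set X // MeasurableSet s}, |(μ ↑s).toReal - (ν ↑s).toReal|

open Classical in
/-- The contribution to `F_τ` of embeddings whose image meets the seed. -/
def obsMeetSeed (k m : ℕ) {r : ℕ} (τ : SimpleGraph (Fin r)) (ℓ : Fin r → ℕ)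
    (T : SimpleGraph (Fin (k + m))) : ℝ :=
  ∑ᶠ φ : τ ↪g T,
    if ∃ (x : Fin r) (y : Fin k), φ x = Fin.castAdd m y then embWeight T ℓ ⇑φ else 0

/-- The contribution to `F_τ` of embeddings contained in the seed. -/
def obsInSeed (k m : ℕ) {r : ℕ} (τ : SimpleGraph (Fin r)) (ℓ : Fin r → ℕ)
    (S : SimpleGraph (Fin k)) (T : SimpleGraph (Fin (k + m))) : ℝ :=
  ∑ᶠ φ : τ ↪g S, embWeight T ℓ fun u => Fin.castAdd m (φ u)

/-- `D_{τ,d}(T)`: the number of perfect embeddings of `(τ,d)` in `T`. -/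
def perfCount {V W : Type*} (τ : SimpleGraph V) (d : V → ℕ) (T : SimpleGraph W) : ℕ :=
  Nat.card {φ : τ ↪g T // ∀ u, degR T (φ u) = d u}

/-- `τ` is `(T₁,T₂)`-blind. -/
def IsBlind {V W₁ W₂ : Type*} (τ : SimpleGraph V) (T₁ : SimpleGraph W₁)
    (T₂ : SimpleGraph W₂) : Prop :=
  ∀ d : V → ℕ, (∀ u, 1 ≤ d u) → perfCount τ d T₁ = perfCount τ d T₂

/-- `D_{σ,τ,d}(T)`: perfect embeddings of `(τ,d)` meeting the seed exactly in `φ(A)`. -/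
def perfCountSeed (k m : ℕ) {r : ℕ} (τ : SimpleGraph (Fin r)) (A : Finset (Fin r))
    (d : Fin r → ℕ) (T : SimpleGraph (Fin (k + m))) : ℕ :=
  Nat.card {φ : τ ↪g T //
    (∀ u, degR T (φ u) = d u) ∧ ∀ u : Fin r, (∃ y : Fin k, φ u = Fin.castAdd m y) ↔ u ∈ A}

/-- The σ-algebra generated by `T_0, …, T_m`. -/
def natFilt {Ω : Type*} [MeasurableSpace Ω] {k : ℕ}
    (T : (m : ℕ) → Ω → SimpleGraph (Fin (k + m))) (m : ℕ) : MeasurableSpace Ω :=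
  ⨆ j ∈ Set.Iic m, MeasurableSpace.comap (T j) inferInstance

/-- `(T_m)` is an α-PA chain started from the seed `S`, on the probability space `(Ω,P)`. -/
structure IsPAChain (α : ℝ) {k : ℕ} (S : SimpleGraph (Fin k)) {Ω : Type*} [MeasurableSpace Ω]
    (P : Measure Ω) (T : (m : ℕ) → Ω → SimpleGraph (Fin (k + m))) : Prop where
  isProb : IsProbabilityMeasure P
  meas : ∀ m, Measurable (T m)
  init : ∀ᵐ ω ∂P, T 0 ω = S
  step : ∀ (m : ℕ) (f : SimpleGraph (Fin (k + (m + 1))) → ℝ),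
    P[(fun ω => f (T (m + 1) ω))|natFilt T m] =ᵐ[P]
      fun ω => ∫ G, f G ∂stepMeasure α (T m ω)

/-- The natural filtration of the chain. -/
def natFiltration {Ω : Type*} [mΩ : MeasurableSpace Ω] {k : ℕ}
    (T : (m : ℕ) → Ω → SimpleGraph (Fin (k + m))) (hT : ∀ m, Measurable (T m)) :
    Filtration ℕ mΩ where
  seq := natFilt T
  mono' _ _ hij := biSup_mono fun _ hx => le_trans hx hij
  le' _ := iSup_le fun l => iSup_le fun _ => (hT l).comap_le

/-- Isomorphism of simple graphs as a setoid. -/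
def isoSetoid (n : ℕ) : Setoid (SimpleGraph (Fin n)) where
  r G H := Nonempty (G ≃g H)
  iseqv := ⟨fun G => ⟨RelIso.refl G.Adj⟩, fun ⟨e⟩ => ⟨e.symm⟩, fun ⟨e⟩ ⟨f⟩ => ⟨e.trans f⟩⟩

/-- Isomorphism classes of graphs on `n` vertices. -/
def IsoClass (n : ℕ) : Type := Quotient (isoSetoid n)

instance (n : ℕ) : MeasurableSpace (IsoClass n) := ⊤

/-- The law of the isomorphism class of the α-PA tree with `n` vertices grown from `S`. -/
def isoClassLaw (α : ℝ) {k : ℕ} (S : SimpleGraph (Fin k)) (n : ℕ) : Measure (IsoClass n) :=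
  if h : k ≤ n then
    (paLaw α S (n - k)).map fun G =>
      Quotient.mk (isoSetoid n) (G.map (finCongr (Nat.add_sub_cancel' h)).toEmbedding)
  else 0


/-! ### Rising factorials -/

/-- Rising factorial `x (x + 1) ⋯ (x + l - 1)`. -/
def rise (x : ℝ) (l : ℕ) : ℝ := ∏ i ∈ Finset.range l, (x + (i : ℝ))

lemma descPoch_eq_rise (d α : ℝ) (l : ℕ) :
    descPoch (d + α + (l : ℝ) - 2) l = rise (d - 1 + α) l := by
  unfold descPoch rise
  rw [← Finset.prod_range_reflect]
  refine Finset.prod_congr rfl fun i hi => ?_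
  have h : i + 1 ≤ l := Finset.mem_range.1 hi
  have h2 : l - 1 - i = l - (i + 1) := by omega
  rw [h2, Nat.cast_sub h]
  push_cast
  ring

lemma mul_rise_succ (x : ℝ) (l : ℕ) : x * rise (x + 1) l = (x + l) * rise x l := by
  unfold rise
  have h1 := Finset.prod_range_succ (fun i : ℕ => x + (i : ℝ)) l
  have h2 := Finset.prod_range_succ' (fun i : ℕ => x + (i : ℝ)) l
  have h3 : ∏ i ∈ Finset.range l, (x + 1 + (i : ℝ)) =
      ∏ i ∈ Finset.range l, (x + ((i + 1 : ℕ) : ℝ)) :=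
    Finset.prod_congr rfl fun i _ => by push_cast; ring
  rw [h3]
  simp only [Nat.cast_zero, add_zero] at h2
  linarith

lemma rise_nonneg {x : ℝ} (hx : 0 ≤ x) (l : ℕ) : 0 ≤ rise x l :=
  Finset.prod_nonneg fun i _ => by positivity

lemma rise_sq_le {x : ℝ} (hx : 0 ≤ x) (l : ℕ) : rise x l ^ 2 ≤ rise x (2 * l) := by
  have h : rise x (2 * l) = rise x l * rise (x + l) l := by
    unfold rise
    rw [two_mul, Finset.prod_range_add]
    congr 1
    exact Finset.prod_congr rfl fun i _ => by push_cast; ring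
  have h2 : rise x l ≤ rise (x + l) l :=
    Finset.prod_le_prod (fun i _ => by positivity) fun i _ => by
      have : (0 : ℝ) ≤ l := l.cast_nonneg
      linarith
  rw [h, sq]
  exact mul_le_mul_of_nonneg_left h2 (rise_nonneg hx l)

open Classical in
/-- One-step identity for the product of rising factorials of the weights `x`, when the weight of
the vertex `v` is raised by one. -/
lemma mul_riseProd_shift {k n : ℕ} (e : Fin k ↪ Fin n) (D : Finset (Fin k)) (ℓ : Fin k → ℕ)
    (x : Fin n → ℝ) (v : Fin n) :
    x v * ∏ u ∈ D, rise (x (e u) + if e u = v then 1 else 0) (ℓ u) =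
      (x v + ∑ u ∈ D, if e u = v then (ℓ u : ℝ) else 0) * ∏ u ∈ D, rise (x (e u)) (ℓ u) := by
  by_cases h : ∃ u ∈ D, e u = v
  · obtain ⟨w, hw, rfl⟩ := h
    simp only [EmbeddingLike.apply_eq_iff_eq, Finset.sum_ite_eq', hw, if_true]
    rw [← Finset.mul_prod_erase D _ hw, ← Finset.mul_prod_erase D (fun u => rise (x (e u)) (ℓ u)) hw]
    have h1 : ∏ u ∈ D.erase w, rise (x (e u) + if u = w then 1 else 0) (ℓ u) =
        ∏ u ∈ D.erase w, rise (x (e u)) (ℓ u) :=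
      Finset.prod_congr rfl fun u hu => by simp [Finset.ne_of_mem_erase hu]
    rw [h1, if_pos rfl, ← mul_assoc, mul_rise_succ, mul_assoc]
  · push Not at h
    rw [Finset.sum_eq_zero fun u hu => if_neg (h u hu), add_zero]
    congr 1
    exact Finset.prod_congr rfl fun u hu => by simp [h u hu]

/-! ### Degrees after one attachment step -/

lemma extendTree_adj_castSucc {n : ℕ} (G : SimpleGraph (Fin n)) (u a b : Fin n) :
    (extendTree G u).Adj a.castSucc b.castSucc ↔ G.Adj a b := by
  simp only [extendTree, SimpleGraph.fromRel_adj]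
  constructor
  · rintro ⟨-, (⟨a', b', h1, h2, h3⟩ | ⟨-, h⟩) | (⟨a', b', h1, h2, h3⟩ | ⟨-, h⟩)⟩
    · rw [Fin.castSucc_inj] at h1 h2; subst h1 h2; exact h3
    · exact absurd h (Fin.castSucc_lt_last _).ne
    · rw [Fin.castSucc_inj] at h1 h2; subst h1 h2; exact h3.symm
    · exact absurd h (Fin.castSucc_lt_last _).ne
  · intro h
    exact ⟨fun e => h.ne (Fin.castSucc_injective _ e), Or.inl (Or.inl ⟨a, b, rfl, rfl, h⟩)⟩

lemma extendTree_adj_last {n : ℕ} (G : SimpleGraph (Fin n)) (u a : Fin n) :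
    (extendTree G u).Adj a.castSucc (Fin.last n) ↔ a = u := by
  simp only [extendTree, SimpleGraph.fromRel_adj]
  constructor
  · rintro ⟨-, (⟨a', b', h1, h2, h3⟩ | ⟨h, -⟩) | (⟨a', b', h1, h2, h3⟩ | ⟨h, -⟩)⟩
    · exact absurd h2.symm (Fin.castSucc_lt_last _).ne
    · exact Fin.castSucc_injective _ h
    · exact absurd h1.symm (Fin.castSucc_lt_last _).ne
    · exact absurd h.symm (Fin.castSucc_lt_last _).ne
  · rintro rfl
    exact ⟨(Fin.castSucc_lt_last _).ne, by simp⟩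

open Classical in
lemma degR_eq_sum {n : ℕ} (G : SimpleGraph (Fin n)) (v : Fin n) :
    degR G v = ∑ w, if G.Adj v w then 1 else 0 := by
  rw [degR, Nat.card_eq_fintype_card, Fintype.card_subtype, Finset.card_filter]

open Classical in
lemma degR_extendTree_castSucc {n : ℕ} (G : SimpleGraph (Fin n)) (u v : Fin n) :
    degR (extendTree G u) v.castSucc = degR G v + if v = u then 1 else 0 := by
  rw [degR_eq_sum, degR_eq_sum, Fin.sum_univ_castSucc]
  simp only [extendTree_adj_castSucc, extendTree_adj_last]

open Classical in
lemma degR_extendTree_last {n : ℕ} (G : SimpleGraph (Fin n)) (u : Fin n) :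
    degR (extendTree G u) (Fin.last n) = 1 := by
  rw [degR_eq_sum, Fin.sum_univ_castSucc]
  simp [SimpleGraph.adj_comm _ (Fin.last n), extendTree_adj_last]

/-- The part of being a tree that the argument uses: all degrees are positive and they sum to
twice the number of vertices minus two. -/
def IsGood {n : ℕ} (G : SimpleGraph (Fin n)) : Prop :=
  (∀ v, 1 ≤ degR G v) ∧ ∑ v, degR G v + 2 = 2 * n

lemma IsGood.extendTree {n : ℕ} {G : SimpleGraph (Fin n)} (h : IsGood G) (u : Fin n) :
    IsGood (extendTree G u) := by
  classical
  constructor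
  · intro v
    induction v using Fin.lastCases with
    | last => rw [degR_extendTree_last]
    | cast v => rw [degR_extendTree_castSucc]; exact (h.1 v).trans (Nat.le_add_right _ _)
  · rw [Fin.sum_univ_castSucc, degR_extendTree_last]
    simp only [degR_extendTree_castSucc, Finset.sum_add_distrib, Finset.sum_ite_eq',
      Finset.mem_univ, if_true]
    have := h.2
    omega

lemma isGood_of_isTree {k : ℕ} (hk : 2 ≤ k) {S : SimpleGraph (Fin k)} (hS : S.IsTree) :
    IsGood S := by
  classical
  have hd : ∀ v, degR S v = S.degree v := fun v => by
    rw [degR, Nat.card_eq_fintype_card, ← SimpleGraph.card_neighborSet_eq_degree]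
    rfl
  have : Nontrivial (Fin k) := Fin.nontrivial_iff_two_le.2 hk
  constructor
  · intro v
    rw [hd]
    exact hS.connected.preconnected.degree_pos_of_nontrivial v
  · simp only [hd]
    rw [SimpleGraph.sum_degrees_eq_twice_card_edges]
    have := hS.card_edgeFinset
    rw [Fintype.card_fin] at this
    omega

/-! ### One step of the dynamics -/

lemma weight_nonneg {α : ℝ} (hα : 0 < α) {n : ℕ} {G : SimpleGraph (Fin n)} (h : IsGood G)
    (v : Fin n) : 0 ≤ (degR G v : ℝ) - 1 + α := by
  have : (1 : ℝ) ≤ degR G v := by exact_mod_cast h.1 v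
  linarith

lemma norm_pos {α : ℝ} (hα : 0 < α) {n : ℕ} (hn : 2 ≤ n) : 0 < (1 + α) * (n : ℝ) - 2 := by
  have : (2 : ℝ) ≤ n := by exact_mod_cast hn
  nlinarith

lemma sum_weight {α : ℝ} {n : ℕ} {G : SimpleGraph (Fin n)} (h : IsGood G) :
    ∑ v, ((degR G v : ℝ) - 1 + α) = (1 + α) * (n : ℝ) - 2 := by
  have h2 : ∑ v, (degR G v : ℝ) + 2 = 2 * n := by exact_mod_cast h.2
  simp only [Finset.sum_add_distrib, Finset.sum_sub_distrib, Finset.sum_const, Finset.card_univ,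
    Fintype.card_fin, nsmul_eq_mul]
  linarith

lemma integral_step {α : ℝ} (hα : 0 < α) {n : ℕ} (hn : 2 ≤ n) {G : SimpleGraph (Fin n)}
    (h : IsGood G) (f : SimpleGraph (Fin (n + 1)) → ℝ) :
    ∫ H, f H ∂stepMeasure α G =
      (∑ v, ((degR G v : ℝ) - 1 + α) * f (extendTree G v)) / ((1 + α) * (n : ℝ) - 2) := by
  have hf : StronglyMeasurable f := StronglyMeasurable.of_discrete
  rw [stepMeasure, integral_finsetSum_measure]
  · rw [Finset.sum_div]
    refine Finset.sum_congr rfl fun v _ => ?_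
    rw [integral_smul_measure, integral_dirac, ENNReal.toReal_ofReal
      (div_nonneg (weight_nonneg hα h v) (norm_pos hα hn).le), smul_eq_mul]
    ring
  · intro v _
    exact (integrable_dirac (by simp)).smul_measure ENNReal.ofReal_ne_top

/-- The observable `M`: the product over `D` of rising factorials of the vertex weights, where `e`
locates the seed inside the current graph. -/
def riseProd (α : ℝ) {k n : ℕ} (e : Fin k → Fin n) (D : Finset (Fin k)) (ℓ : Fin k → ℕ)
    (G : SimpleGraph (Fin n)) : ℝ :=
  ∏ u ∈ D, rise ((degR G (e u) : ℝ) - 1 + α) (ℓ u)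

lemma integral_step_riseProd {α : ℝ} (hα : 0 < α) {k n : ℕ} (hn : 2 ≤ n)
    {G : SimpleGraph (Fin n)} (h : IsGood G) (e : Fin k ↪ Fin n) (D : Finset (Fin k))
    (ℓ : Fin k → ℕ) :
    ∫ H, riseProd α (fun u => (e u).castSucc) D ℓ H ∂stepMeasure α G =
      riseProd α e D ℓ G * (1 + ((∑ u ∈ D, ℓ u : ℕ) : ℝ) / ((1 + α) * (n : ℝ) - 2)) := by
  classical
  have hZ := norm_pos hα hn
  have key : ∀ v, ((degR G v : ℝ) - 1 + α) *
      riseProd α (fun u => (e u).castSucc) D ℓ (extendTree G v) =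
      (((degR G v : ℝ) - 1 + α) + ∑ u ∈ D, if e u = v then (ℓ u : ℝ) else 0) *
        riseProd α e D ℓ G := by
    intro v
    rw [riseProd, riseProd, ← mul_riseProd_shift e D ℓ (fun v => (degR G v : ℝ) - 1 + α) v]
    congr 1
    refine Finset.prod_congr rfl fun u _ => ?_
    rw [degR_extendTree_castSucc]
    congr 1
    push_cast
    ring
  rw [integral_step hα hn h, Finset.sum_congr rfl fun v _ => key v, ← Finset.sum_mul,
    Finset.sum_add_distrib, sum_weight h, Finset.sum_comm]
  simp only [Finset.sum_ite_eq, Finset.mem_univ, if_true]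
  push_cast
  field_simp

/-! ### The chain -/

section Chain

variable {α : ℝ} {k : ℕ} {S : SimpleGraph (Fin k)} {Ω : Type*} [MeasurableSpace Ω]
  {P : Measure Ω} {T : (m : ℕ) → Ω → SimpleGraph (Fin (k + m))}

lemma IsPAChain.integrable (hc : IsPAChain α S P T) (m : ℕ)
    (f : SimpleGraph (Fin (k + m)) → ℝ) : Integrable (fun ω => f (T m ω)) P := by
  have := hc.isProb
  obtain ⟨C, hC⟩ := (Set.finite_range fun G => ‖f G‖).bddAbove
  refine Integrable.of_bound
    ((Measurable.of_discrete (f := f)).comp (hc.meas m)).aestronglyMeasurable C ?_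
  exact Eventually.of_forall fun ω => hC ⟨T m ω, rfl⟩

open Classical in
lemma IsPAChain.ae_isGood (hc : IsPAChain α S P T) (hα : 0 < α) (hk : 2 ≤ k) (hS : S.IsTree)
    (m : ℕ) : ∀ᵐ ω ∂P, IsGood (T m ω) := by
  have := hc.isProb
  induction m with
  | zero =>
    filter_upwards [hc.init] with ω hω
    rw [hω]
    exact isGood_of_isTree hk hS
  | succ m ih =>
    let f : SimpleGraph (Fin (k + (m + 1))) → ℝ := fun G => if IsGood G then 0 else 1
    -- The step law of a good graph does not charge bad graphs, so the bad event has mean zero.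
    have hz : P[(fun ω => f (T (m + 1) ω))|natFilt T m] =ᵐ[P] 0 := by
      refine (hc.step m f).trans ?_
      filter_upwards [ih] with ω hω
      refine (integral_step hα (by omega) hω f).trans ?_
      have h0 : ∀ v, f (extendTree (T m ω) v) = 0 := fun v => if_pos (hω.extendTree v)
      simp only [h0, mul_zero, Finset.sum_const_zero, zero_div, Pi.zero_apply]
    have hint : ∫ ω, f (T (m + 1) ω) ∂P = 0 := by
      rw [← integral_condExp ((natFiltration T hc.meas).le m) (f := fun ω => f (T (m + 1) ω))]
      exact (integral_congr_ae hz).trans (by simp)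
    have hnn : ∀ G, 0 ≤ f G := fun G => by
      simp only [f]
      split_ifs <;> norm_num
    rw [integral_eq_zero_iff_of_nonneg (fun ω => hnn _) (hc.integrable _ f)] at hint
    filter_upwards [hint] with ω hω
    by_contra hb
    simp [f, hb] at hω

/-- The compensating factor `W` after `m` steps, for total decoration `a`. -/
def compFactor (α : ℝ) (k a m : ℕ) : ℝ :=
  ∏ t ∈ Finset.Ico k (k + m), (1 + (a : ℝ) / ((1 + α) * (t : ℝ) - 2))⁻¹

lemma IsPAChain.martingale (hc : IsPAChain α S P T) (hα : 0 < α) (hk : 2 ≤ k) (hS : S.IsTree)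
    (D : Finset (Fin k)) (ℓ : Fin k → ℕ) :
    Martingale
      (fun m ω => riseProd α (Fin.castAdd m) D ℓ (T m ω) * compFactor α k (∑ u ∈ D, ℓ u) m)
      (natFiltration T hc.meas) P := by
  have := hc.isProb
  refine martingale_nat (fun m => ?_) (fun m => ?_) (fun m => ?_)
  · have hT : Measurable[natFilt T m] (T m) :=
      Measurable.of_comap_le (le_iSup₂_of_le m (Set.mem_Iic.2 le_rfl) le_rfl)
    exact ((Measurable.of_discrete (f := fun G =>
      riseProd α (Fin.castAdd m) D ℓ G * compFactor α k (∑ u ∈ D, ℓ u) m)).comp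
      hT).stronglyMeasurable
  · exact hc.integrable m fun G =>
      riseProd α (Fin.castAdd m) D ℓ G * compFactor α k (∑ u ∈ D, ℓ u) m
  · refine EventuallyEq.symm ((hc.step m fun G =>
      riseProd α (Fin.castAdd (m + 1)) D ℓ G * compFactor α k (∑ u ∈ D, ℓ u) (m + 1)).trans ?_)
    filter_upwards [hc.ae_isGood hα hk hS m] with ω hω
    have hn : 2 ≤ k + m := by omega
    have hs := integral_step_riseProd hα hn hω (Fin.castAddEmb m) D ℓ
    have hne : (1 + ((∑ u ∈ D, ℓ u : ℕ) : ℝ) / ((1 + α) * ((k + m : ℕ) : ℝ) - 2)) ≠ 0 := by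
      have := norm_pos hα hn
      positivity
    have hW : compFactor α k (∑ u ∈ D, ℓ u) (m + 1) = compFactor α k (∑ u ∈ D, ℓ u) m *
        (1 + ((∑ u ∈ D, ℓ u : ℕ) : ℝ) / ((1 + α) * ((k + m : ℕ) : ℝ) - 2))⁻¹ :=
      Finset.prod_Ico_succ_top (Nat.le_add_right k m) _
    rw [integral_mul_const, hW]
    refine (congrArg (· * _) hs).trans ?_
    simp only [Fin.coe_castAddEmb]
    field_simp

lemma riseProd_sq_le (hα : 0 < α) {n : ℕ} {G : SimpleGraph (Fin n)} (h : IsGood G)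
    (e : Fin k → Fin n) (D : Finset (Fin k)) (ℓ : Fin k → ℕ) :
    riseProd α e D ℓ G ^ 2 ≤ riseProd α e D (fun u => 2 * ℓ u) G := by
  rw [riseProd, riseProd, ← Finset.prod_pow]
  exact Finset.prod_le_prod (fun u _ => sq_nonneg _) fun u _ =>
    rise_sq_le (weight_nonneg hα h _) _

lemma compFactor_sq_le (hα : 0 < α) (hk : 2 ≤ k) (a m : ℕ) :
    compFactor α k a m ^ 2 ≤ compFactor α k (2 * a) m := by
  rw [compFactor, compFactor, ← Finset.prod_pow]
  refine Finset.prod_le_prod (fun t _ => sq_nonneg _) fun t ht => ?_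
  have hZ := norm_pos hα (hk.trans (Finset.mem_Ico.1 ht).1)
  rw [inv_pow]
  apply inv_anti₀ (by positivity)
  push_cast
  rw [mul_div_assoc]
  nlinarith [sq_nonneg ((a : ℝ) / ((1 + α) * (t : ℝ) - 2))]

lemma IsPAChain.integral_sq_le (hc : IsPAChain α S P T) (hα : 0 < α) (hk : 2 ≤ k)
    (hS : S.IsTree) (D : Finset (Fin k)) (ℓ : Fin k → ℕ) (m : ℕ) :
    ∫ ω, (riseProd α (Fin.castAdd m) D ℓ (T m ω) * compFactor α k (∑ u ∈ D, ℓ u) m) ^ 2 ∂P ≤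
      ∫ ω, riseProd α (Fin.castAdd 0) D (fun u => 2 * ℓ u) (T 0 ω) *
        compFactor α k (∑ u ∈ D, 2 * ℓ u) 0 ∂P := by
  have := hc.isProb
  have hM := hc.martingale hα hk hS D fun u => 2 * ℓ u
  have hE := hM.setIntegral_eq (Nat.zero_le m) MeasurableSet.univ
  simp only [setIntegral_univ] at hE
  rw [hE]
  refine integral_mono_ae (hc.integrable m fun G =>
    (riseProd α (Fin.castAdd m) D ℓ G * compFactor α k (∑ u ∈ D, ℓ u) m) ^ 2)
    (hM.integrable m) ?_
  filter_upwards [hc.ae_isGood hα hk hS m] with ω hω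
  rw [mul_pow, ← Finset.mul_sum]
  have h1 := riseProd_sq_le hα hω (Fin.castAdd m) D ℓ
  exact mul_le_mul h1 (compFactor_sq_le hα hk _ m) (sq_nonneg _) ((sq_nonneg _).trans h1)

end Chain

/-- **Lemma 4.10.** For a seed `S` of size `k ≥ 2`, a subtree `R` of `S`
(given by its vertex set `D`) with decoration `ℓ`, setting
`M_n = ∏_{u∈D} [deg_{T_n}(u) + α + ℓ(u) - 2]_{ℓ(u)}` and
`W_n = ∏_{t=k}^{n-1} (1 + |ℓ|/((1+α)t-2))⁻¹`, the sequence `(M_n·W_n)` is a martingale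
for the natural filtration of the α-PA process, bounded in `L²`. -/
theorem degree_product_martingale (α : ℝ) (hα : 0 < α) (k : ℕ) (hk : 2 ≤ k)
    (S : SimpleGraph (Fin k)) (hS : S.IsTree)
    {Ω : Type*} [MeasurableSpace Ω] (P : Measure Ω)
    (T : (m : ℕ) → Ω → SimpleGraph (Fin (k + m))) (hchain : IsPAChain α S P T)
    (D : Finset (Fin k)) (hD : (S.induce (↑D : Set (Fin k))).IsTree) (ℓ : Fin k → ℕ) :
    Martingale
      (fun m ω =>
        (∏ u ∈ D, descPoch ((degR (T m ω) (Fin.castAdd m u) : ℝ) + α + (ℓ u : ℝ) - 2) (ℓ u)) *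
          ∏ t ∈ Finset.Ico k (k + m),
            (1 + ((∑ u ∈ D, ℓ u : ℕ) : ℝ) / ((1 + α) * (t : ℝ) - 2))⁻¹)
      (natFiltration T hchain.meas) P ∧
    ∃ C : ℝ, ∀ m : ℕ,
      (∫ ω,
          ((∏ u ∈ D, descPoch ((degR (T m ω) (Fin.castAdd m u) : ℝ) + α + (ℓ u : ℝ) - 2) (ℓ u)) *
            ∏ t ∈ Finset.Ico k (k + m),
              (1 + ((∑ u ∈ D, ℓ u : ℕ) : ℝ) / ((1 + α) * (t : ℝ) - 2))⁻¹) ^ 2 ∂P) ≤ C := by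
  simp only [descPoch_eq_rise]
  exact ⟨hchain.martingale hα hk hS D ℓ, _, hchain.integral_sq_le hα hk hS D ℓ⟩

end AffinePA
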